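/- arXiv:0912.1518 — 2 statements merged into one kernel-verified Lean document; each statement's English description precedes it below -/
import Mathlib

section
/- Let l_1, m_1, k be positive integers with l_1 ≤ m_1. Then the number of subsets X of [l_1,m_1] such that l_1 ∈ X, |X| = k, and gcd(X) = 1 equals Σ_{d | l_1} μ(d) · C(⌊m_1/d⌋ − l_1/d, k−1), where C(·,·) denotes the binomial coefficient. -/
theorem aux_card_mult (l m d : ℕ) (hd : 0 < d) (hdl : d ∣ l) :
    ((Finset.Ioc l m).filter (fun x => d ∣ x)).card = m / d - l / d := by
  have : (Finset.Ioc l m).filter (fun x => d ∣ x)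
      = (Finset.Ioc (l / d) (m / d)).image (fun x => d * x) := by
    ext x
    simp only [Finset.mem_filter, Finset.mem_Ioc, Finset.mem_image]
    obtain ⟨e, rfl⟩ := hdl
    rw [Nat.mul_div_cancel_left _ hd]
    constructor
    · rintro ⟨⟨h1, h2⟩, c, rfl⟩
      refine ⟨c, ⟨lt_of_mul_lt_mul_left h1 (Nat.zero_le _), ?_⟩, rfl⟩
      rw [Nat.le_div_iff_mul_le hd, mul_comm]
      exact h2
    · rintro ⟨c, ⟨h1, h2⟩, rfl⟩
      rw [Nat.le_div_iff_mul_le hd, mul_comm] at h2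
      exact ⟨⟨Nat.mul_lt_mul_of_pos_left h1 hd, h2⟩, Dvd.intro _ rfl⟩
  rw [this, Finset.card_image_of_injective _ (fun a b hab => Nat.eq_of_mul_eq_mul_left hd hab),
    Nat.card_Ioc]

theorem aux_count (l m k d : ℕ) (hk : 0 < k) (h : l ≤ m) (hd : 0 < d) (hdl : d ∣ l) :
    (((Finset.Icc l m).powerset).filter
        (fun X : Finset ℕ => (l ∈ X ∧ X.card = k) ∧ d ∣ X.gcd id)).card
      = Nat.choose (m / d - l / d) (k - 1) := by
  rw [← aux_card_mult l m d hd hdl, ← Finset.card_powersetCard]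
  refine Finset.card_bij' (fun X _ => X.erase l) (fun Y _ => insert l Y) ?_ ?_ ?_ ?_
  · intro X hX
    simp only [Finset.mem_filter, Finset.mem_powerset, Finset.dvd_gcd_iff, id] at hX
    obtain ⟨h1, ⟨h2, h3⟩, h4⟩ := hX
    rw [Finset.mem_powersetCard, Finset.card_erase_of_mem h2, h3]
    refine ⟨fun x hx => ?_, rfl⟩
    rw [Finset.mem_erase] at hx
    have := Finset.mem_Icc.1 (h1 hx.2)
    rw [Finset.mem_filter, Finset.mem_Ioc]
    exact ⟨⟨by omega, this.2⟩, h4 x hx.2⟩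
  · intro Y hY
    rw [Finset.mem_powersetCard] at hY
    have hl : l ∉ Y := fun hh => by simpa using hY.1 hh
    simp only [Finset.mem_filter, Finset.mem_powerset, Finset.dvd_gcd_iff, id]
    refine ⟨fun x hx => ?_, ⟨Finset.mem_insert_self _ _, ?_⟩, fun x hx => ?_⟩
    · rw [Finset.mem_insert] at hx
      rcases hx with rfl | hx
      · simp [h]
      · have := hY.1 hx
        rw [Finset.mem_filter, Finset.mem_Ioc] at this
        rw [Finset.mem_Icc]
        omega
    · rw [Finset.card_insert_of_notMem hl, hY.2]; omega
    · rw [Finset.mem_insert] at hx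
      rcases hx with rfl | hx
      · exact hdl
      · exact (Finset.mem_filter.1 (hY.1 hx)).2
  · intro X hX
    exact Finset.insert_erase (Finset.mem_filter.1 hX).2.1.1
  · intro Y hY
    rw [Finset.mem_powersetCard] at hY
    exact Finset.erase_insert (fun hh => by simpa using hY.1 hh)

theorem aux_moebius (n : ℕ) :
    ∑ d ∈ n.divisors, ArithmeticFunction.moebius d = if n = 1 then 1 else 0 := by
  rw [← ArithmeticFunction.coe_mul_zeta_apply, ArithmeticFunction.moebius_mul_coe_zeta,
    ArithmeticFunction.one_apply]

/-- Lemma 2(b): the number of `k`-element relatively prime subsets of `[l₁,m₁]`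
containing `l₁` equals `∑_{d ∣ l₁} μ(d) C(⌊m₁/d⌋ - l₁/d, k-1)`. -/
theorem stmt_4 (l₁ m₁ k : ℕ) (hl₁ : 0 < l₁) (hk : 0 < k) (h : l₁ ≤ m₁) :
    ((((Finset.Icc l₁ m₁).powerset).filter
        (fun X : Finset ℕ => l₁ ∈ X ∧ X.card = k ∧ X.gcd id = 1)).card : ℤ)
      = ∑ d ∈ l₁.divisors,
          (ArithmeticFunction.moebius d) *
            (Nat.choose (m₁ / d - l₁ / d) (k - 1)) := by
  have key : ∀ d ∈ l₁.divisors, (ArithmeticFunction.moebius d) *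
            ((Nat.choose (m₁ / d - l₁ / d) (k - 1) : ℕ) : ℤ)
      = ∑ X ∈ ((Finset.Icc l₁ m₁).powerset).filter
        (fun X : Finset ℕ => l₁ ∈ X ∧ X.card = k),
          if d ∣ X.gcd id then ArithmeticFunction.moebius d else 0 := by
    intro d hd
    have hdl := Nat.dvd_of_mem_divisors hd
    rw [← aux_count l₁ m₁ k d hk h (Nat.pos_of_dvd_of_pos hdl hl₁) hdl,
      ← Finset.sum_filter, Finset.filter_filter, Finset.sum_const, nsmul_eq_mul, mul_comm]
  rw [Finset.sum_congr rfl key, Finset.sum_comm]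
  have e : ((Finset.Icc l₁ m₁).powerset).filter
        (fun X : Finset ℕ => l₁ ∈ X ∧ X.card = k ∧ X.gcd id = 1)
      = (((Finset.Icc l₁ m₁).powerset).filter
        (fun X : Finset ℕ => l₁ ∈ X ∧ X.card = k)).filter (fun X => X.gcd id = 1) := by
    rw [Finset.filter_filter]
    simp only [and_assoc]
  rw [e, Finset.card_filter]
  push_cast
  refine Finset.sum_congr rfl fun X hX => ?_
  have hg : X.gcd id ∣ l₁ := Finset.gcd_dvd (f := id) (Finset.mem_filter.1 hX).2.1
  rw [← aux_moebius, ← Finset.sum_filter]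
  refine Finset.sum_congr ?_ fun _ _ => rfl
  ext d
  simp only [Finset.mem_filter, Nat.mem_divisors]
  constructor
  · rintro ⟨h1, _⟩
    exact ⟨⟨h1.trans hg, hl₁.ne'⟩, h1⟩
  · rintro ⟨_, h1⟩
    exact ⟨h1, fun h0 => hl₁.ne' (Nat.eq_zero_of_zero_dvd (h0 ▸ hg))⟩
end

section
/- Let l, m, k be positive integers with l ≤ m. Then f_k([l,m]) = Σ_{d=1}^{m} μ(d) · C(⌊m/d⌋ − ⌊(l−1)/d⌋, k), where C(·,·) denotes the binomial coefficient. -/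
theorem aux_card (l m d : ℕ) (hl : 0 < l) (h : l ≤ m) :
    ((Finset.Icc l m).filter (fun x => d ∣ x)).card = m / d - (l - 1) / d := by
  rw [← Nat.Ioc_filter_dvd_card_eq_div m d, ← Nat.Ioc_filter_dvd_card_eq_div (l - 1) d]
  rw [← Finset.card_sdiff_of_subset]
  · congr 1
    ext x
    simp only [Finset.mem_filter, Finset.mem_Icc, Finset.mem_sdiff, Finset.mem_Ioc]
    constructor
    · rintro ⟨⟨h1, h2⟩, h3⟩
      exact ⟨⟨⟨by omega, h2⟩, h3⟩, fun hh => by omega⟩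
    · rintro ⟨⟨⟨h1, h2⟩, h3⟩, h4⟩
      refine ⟨⟨?_, h2⟩, h3⟩
      by_contra hc
      exact h4 ⟨⟨h1, by omega⟩, h3⟩
  · intro x
    simp only [Finset.mem_filter, Finset.mem_Ioc]
    rintro ⟨⟨h1, h2⟩, h3⟩
    exact ⟨⟨h1, by omega⟩, h3⟩

/-- Corollary (Ayad–Kihel) (b): `f_k([l,m]) = ∑_{d=1}^{m} μ(d) C(⌊m/d⌋ - ⌊(l-1)/d⌋, k)`,
where `f_k(A)` counts the `k`-element relatively prime subsets of `A`. -/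
theorem stmt_12 (l m k : ℕ) (hl : 0 < l) (hk : 0 < k) (h : l ≤ m) :
    ((((Finset.Icc l m).powerset).filter
        (fun X : Finset ℕ => X.card = k ∧ X.gcd id = 1)).card : ℤ)
      = ∑ d ∈ Finset.Icc 1 m,
          (ArithmeticFunction.moebius d) * (Nat.choose (m / d - (l - 1) / d) k) := by
  have h1 : ((Finset.Icc l m).powerset).filter
        (fun X : Finset ℕ => X.card = k ∧ X.gcd id = 1)
      = (Finset.powersetCard k (Finset.Icc l m)).filter (fun X => X.gcd id = 1) := by
    ext X
    simp only [Finset.mem_filter, Finset.mem_powerset, Finset.mem_powersetCard, and_assoc]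
  have h2 : ∀ X ∈ Finset.powersetCard k (Finset.Icc l m),
      (if X.gcd id = 1 then (1 : ℤ) else 0)
        = ∑ d ∈ Finset.Icc 1 m, if d ∣ X.gcd id then ArithmeticFunction.moebius d else 0 := by
    intro X hX
    rw [Finset.mem_powersetCard] at hX
    obtain ⟨x, hx⟩ := Finset.card_pos.mp (hX.2 ▸ hk)
    have hxm := Finset.mem_Icc.mp (hX.1 hx)
    have hdx : X.gcd id ∣ x := Finset.gcd_dvd (f := id) hx
    have hg : X.gcd id ≠ 0 := by
      intro h0
      rw [h0, zero_dvd_iff] at hdx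
      omega
    rw [← aux_moebius, ← Finset.sum_filter]
    apply Finset.sum_congr _ (fun _ _ => rfl)
    ext d
    simp only [Nat.mem_divisors, Finset.mem_filter, Finset.mem_Icc]
    constructor
    · rintro ⟨a, _⟩
      have := Nat.le_of_dvd (by omega) (a.trans hdx)
      exact ⟨⟨Nat.pos_of_dvd_of_pos a (Nat.pos_of_ne_zero hg), by omega⟩, a⟩
    · rintro ⟨_, a⟩
      exact ⟨a, hg⟩
  rw [h1, Finset.card_filter, Nat.cast_sum]
  simp only [Nat.cast_ite, Nat.cast_one, Nat.cast_zero]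
  rw [Finset.sum_congr rfl h2, Finset.sum_comm]
  apply Finset.sum_congr rfl
  intro d _
  rw [← aux_card l m d hl h, ← Finset.card_powersetCard, ← Finset.sum_filter,
    Finset.sum_const, nsmul_eq_mul, mul_comm]
  congr 3
  ext X
  simp only [Finset.mem_filter, Finset.mem_powersetCard, Finset.dvd_gcd_iff, id,
    Finset.subset_iff]
  constructor
  · rintro ⟨⟨a, b⟩, c⟩
    exact ⟨fun x hx => ⟨a hx, c x hx⟩, b⟩
  · rintro ⟨a, b⟩
    exact ⟨⟨fun x hx => (a hx).1, b⟩, fun x hx => (a hx).2⟩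
end
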